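/- (Leibniz rule for the skew-q-derivative.) Let q > 1 be real, r, s naturals, and f, g : ℕ → ℝ → ℝ coefficient families with f_i = 0 for i > r and g_i = 0 for i > s. Then for every natural φ, every real λ, every Y ∈ ℝ and every X ≠ 0: the φ-fold skew-q-derivative in X of the function X ↦ Σ_{u=0}^{r+s} (Σ_{i=0}^{u} q^{2is} f_i(λ) g_{u−i}(λ−2i)) Y^u X^{r+s−u} equals Σ_{ℓ=0}^{φ} [φ;ℓ] q^{2(φ−ℓ)(r−ℓ)} Σ_{u=0}^{r+s−φ} (Σ_{i=0}^{u} q^{2i(s−(φ−ℓ))} f_i(λ) β(r−i, ℓ) g_{u−i}(λ−2i) β(s−(u−i), φ−ℓ)) Y^u X^{r+s−φ−u}; here the inner sum is the skew-q-product of the ℓ-th skew-q-derivative of f (degree r−ℓ, coefficients f_i(λ)β(r−i,ℓ)) with the (φ−ℓ)-th skew-q-derivative of g (degree s−(φ−ℓ), coefficients g_j(λ)β(s−j,φ−ℓ)). -/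

import Mathlib

/-- The skew-q-nary Gaussian coefficient `[x;k]` for real `x`. -/
noncomputable def gaussQ (q x : ℝ) (k : ℕ) : ℝ :=
  ∏ i ∈ Finset.range k, (q ^ (2 * x) - q ^ (2 * (i : ℝ))) / (q ^ (2 * (k : ℝ)) - q ^ (2 * (i : ℝ)))

/-- The skew-q-nary Beta function `β(x,k)`. -/
noncomputable def betaQ (q x : ℝ) (k : ℕ) : ℝ :=
  ∏ i ∈ Finset.range k, (q ^ (2 * (x - (i : ℝ))) - 1) / (q ^ 2 - 1)

/-- The skew-q-derivative operator. -/
noncomputable def qDeriv (q : ℝ) (h : ℝ → ℝ) : ℝ → ℝ :=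
  fun X => (h (q ^ 2 * X) - h X) / ((q ^ 2 - 1) * X)

/-!
Since `qDeriv q` sends `X ^ m` to `[m] X ^ (m - 1)`, with `[x] = (q ^ (2 * x) - 1) / (q ^ 2 - 1)`,
its `n`-fold iterate multiplies the coefficient of `Y ^ u * X ^ (d - u)` by `β(d - u, n)`. For the
product term of index `i + j = u` this factor is `β((r - i) + (s - j), n)`, which the
`q`-Vandermonde identity expands into products `β(r - i, ℓ) * β(s - j, n - ℓ)`; the weight
`q ^ (2 * i * s)` of the skew product combines with the Vandermonde weight
`q ^ (2 * (n - ℓ) * (r - i - ℓ))` into `q ^ (2 * (n - ℓ) * (r - ℓ))`, which no longer involves `i`,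
and the weight `q ^ (2 * i * (s - (n - ℓ)))` of the skew product of the derivatives.
The Vandermonde identity itself follows by induction from Pascal's rule and
`[x + y] = [x] + q ^ (2 * x) * [y]`.
-/

open Finset

variable {q : ℝ}

/-- The `q`-number `[x] = β(x, 1)` in base `q ^ 2`, the elementary factor of the skew-q-nary Beta
function. -/
noncomputable def qNum (q x : ℝ) : ℝ :=
  (q ^ (2 * x) - 1) / (q ^ 2 - 1)

theorem rpow_two_mul_natCast (q : ℝ) (m : ℕ) : q ^ (2 * (m : ℝ)) = (q ^ 2) ^ m := by
  rw [← pow_mul, ← Real.rpow_natCast]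
  push_cast
  rfl

theorem qNum_natCast (q : ℝ) (m : ℕ) : qNum q m = ((q ^ 2) ^ m - 1) / (q ^ 2 - 1) := by
  rw [qNum, rpow_two_mul_natCast]

theorem qNum_add (hq : 0 < q) (x y : ℝ) : qNum q (x + y) = qNum q x + q ^ (2 * x) * qNum q y := by
  simp only [qNum, mul_add, Real.rpow_add hq]
  ring

theorem sq_sub_one_ne_zero (hq : 0 < q) (hq1 : q ≠ 1) : q ^ 2 - 1 ≠ 0 :=
  sub_ne_zero.2 ((pow_eq_one_iff_of_nonneg hq.le two_ne_zero).not.2 hq1)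

theorem qNum_ne_zero (hq : 0 < q) (hq1 : q ≠ 1) {x : ℝ} (hx : x ≠ 0) : qNum q x ≠ 0 := by
  have rpow_ne_one : q ^ (2 * x) ≠ 1 := by
    rw [← Real.rpow_zero q, Ne, Real.rpow_right_inj hq hq1]
    exact mul_ne_zero two_ne_zero hx
  exact div_ne_zero (sub_ne_zero.2 rpow_ne_one) (sq_sub_one_ne_zero hq hq1)

theorem betaQ_zero (q x : ℝ) : betaQ q x 0 = 1 :=
  prod_range_zero _

theorem betaQ_succ (q x : ℝ) (k : ℕ) : betaQ q x (k + 1) = betaQ q x k * qNum q (x - k) :=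
  prod_range_succ _ _

theorem betaQ_add_one_succ (q x : ℝ) (k : ℕ) :
    betaQ q (x + 1) (k + 1) = qNum q (x + 1) * betaQ q x k := by
  simp only [betaQ, qNum]
  rw [prod_range_succ', mul_comm]
  simp only [Nat.cast_add_one, add_sub_add_right_eq_sub, Nat.cast_zero, sub_zero]

theorem betaQ_natCast_eq_zero (q : ℝ) {m k : ℕ} (h : m < k) : betaQ q m k = 0 :=
  prod_eq_zero (mem_range.2 h) (by simp)

theorem betaQ_natCast_self_ne_zero (hq : 0 < q) (hq1 : q ≠ 1) (k : ℕ) : betaQ q k k ≠ 0 := by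
  induction k with
  | zero => simp [betaQ_zero]
  | succ k ih =>
    rw [Nat.cast_succ, betaQ_add_one_succ]
    exact mul_ne_zero (qNum_ne_zero hq hq1 k.cast_add_one_ne_zero) ih

theorem betaQ_natCast_succ (q : ℝ) (m k : ℕ) :
    betaQ q m (k + 1) = betaQ q m k * qNum q (m - k : ℕ) := by
  rcases lt_or_ge m k with hmk | hkm
  · rw [betaQ_natCast_eq_zero q hmk, betaQ_natCast_eq_zero q (hmk.trans k.lt_succ_self), zero_mul]
  · rw [betaQ_succ, Nat.cast_sub hkm]

theorem betaQ_pascal (hq : 0 < q) (x : ℝ) (k : ℕ) :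
    betaQ q (x + 1) (k + 1) =
      q ^ (2 * (x - k)) * qNum q (k + 1) * betaQ q x k + betaQ q x (k + 1) := by
  have qNum_split : qNum q (x + 1) = qNum q (x - k) + q ^ (2 * (x - k)) * qNum q (k + 1) := by
    rw [← qNum_add hq]
    ring_nf
  rw [betaQ_add_one_succ, betaQ_succ, qNum_split]
  ring

theorem gaussQ_eq_betaQ_div (hq : 0 < q) (hq1 : q ≠ 1) (x : ℝ) (k : ℕ) :
    gaussQ q x k = betaQ q x k / betaQ q k k := by
  have factor (y : ℝ) (i : ℕ) :
      q ^ (2 * y) - q ^ (2 * (i : ℝ)) = q ^ (2 * (i : ℝ)) * (q ^ (2 * (y - i)) - 1) := by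
    rw [mul_sub, ← Real.rpow_add hq]
    ring_nf
  rw [gaussQ, betaQ, betaQ, ← prod_div_distrib]
  refine prod_congr rfl fun i _ => ?_
  rw [factor, factor, mul_div_mul_left _ _ (Real.rpow_pos_of_pos hq _).ne',
    div_div_div_cancel_right₀ (sq_sub_one_ne_zero hq hq1)]

theorem gaussQ_zero (q x : ℝ) : gaussQ q x 0 = 1 :=
  prod_range_zero _

theorem gaussQ_natCast_eq_zero (q : ℝ) {n k : ℕ} (h : n < k) : gaussQ q n k = 0 :=
  prod_eq_zero (mem_range.2 h) (by simp)

theorem gaussQ_pascal (hq : 0 < q) (hq1 : q ≠ 1) (x : ℝ) (k : ℕ) :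
    gaussQ q (x + 1) (k + 1) = q ^ (2 * (x - k)) * gaussQ q x k + gaussQ q x (k + 1) := by
  have qNum_ne : qNum q (k + 1) ≠ 0 := qNum_ne_zero hq hq1 k.cast_add_one_ne_zero
  have betaQ_ne : betaQ q k k ≠ 0 := betaQ_natCast_self_ne_zero hq hq1 k
  simp only [gaussQ_eq_betaQ_div hq hq1, Nat.cast_succ, betaQ_pascal hq x, betaQ_add_one_succ q k]
  field_simp

theorem betaQ_mul_betaQ_mul_qNum (hq : 0 < q) (a b : ℝ) (l m : ℕ) :
    q ^ (2 * m * (a - l)) * (betaQ q a l * betaQ q b m) * qNum q (a + b - (l + m)) =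
      q ^ (2 * (m : ℝ)) * (q ^ (2 * m * (a - (l + 1 : ℕ))) * (betaQ q a (l + 1) * betaQ q b m)) +
        q ^ (2 * (m + 1 : ℕ) * (a - l)) * (betaQ q a l * betaQ q b (m + 1)) := by
  have qNum_split : qNum q (a + b - (l + m)) =
      qNum q (a - l) + q ^ (2 * (a - l)) * qNum q (b - m) := by
    rw [← qNum_add hq]
    ring_nf
  have weight_left : q ^ (2 * m * (a - l)) =
      q ^ (2 * (m : ℝ)) * q ^ (2 * m * (a - (l + 1 : ℕ))) := by
    rw [← Real.rpow_add hq]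
    push_cast
    ring_nf
  have weight_right : q ^ (2 * (m + 1 : ℕ) * (a - l)) =
      q ^ (2 * m * (a - l)) * q ^ (2 * (a - l)) := by
    rw [← Real.rpow_add hq]
    push_cast
    ring_nf
  rw [qNum_split, betaQ_succ, betaQ_succ, weight_right, ← mul_assoc (q ^ (2 * (m : ℝ))),
    ← weight_left]
  ring

theorem sum_gaussQ_succ_mul (hq : 0 < q) (hq1 : q ≠ 1) (n : ℕ) (w : ℕ → ℕ → ℝ) :
    ∑ p ∈ antidiagonal (n + 1), gaussQ q (n + 1 : ℕ) p.1 * w p.1 p.2 =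
      ∑ p ∈ antidiagonal n, gaussQ q n p.1 *
        (q ^ (2 * (p.2 : ℝ)) * w (p.1 + 1) p.2 + w p.1 (p.2 + 1)) := by
  have pascal : ∀ p ∈ antidiagonal n, gaussQ q (n + 1 : ℕ) (p.1 + 1) * w (p.1 + 1) p.2 =
      gaussQ q n p.1 * (q ^ (2 * (p.2 : ℝ)) * w (p.1 + 1) p.2) +
        gaussQ q n (p.1 + 1) * w (p.1 + 1) p.2 := by
    rintro ⟨l, m⟩ hp
    obtain rfl : l + m = n := mem_antidiagonal.1 hp
    rw [Nat.cast_succ, gaussQ_pascal hq hq1, Nat.cast_add, add_sub_cancel_left]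
    ring
  have shift : w 0 (n + 1) + ∑ p ∈ antidiagonal n, gaussQ q n (p.1 + 1) * w (p.1 + 1) p.2 =
      ∑ p ∈ antidiagonal n, gaussQ q n p.1 * w p.1 (p.2 + 1) := by
    have peel := (Nat.sum_antidiagonal_succ (f := fun p => gaussQ q n p.1 * w p.1 p.2)).symm.trans
      (Nat.sum_antidiagonal_succ' (n := n))
    simpa only [gaussQ_zero, one_mul, gaussQ_natCast_eq_zero q n.lt_succ_self, zero_mul, zero_add]
      using peel
  rw [Nat.sum_antidiagonal_succ, gaussQ_zero, one_mul, sum_congr rfl pascal, sum_add_distrib,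
    add_left_comm, shift, ← sum_add_distrib]
  simp only [mul_add]

theorem betaQ_add (hq : 0 < q) (hq1 : q ≠ 1) (a b : ℝ) (n : ℕ) :
    betaQ q (a + b) n = ∑ p ∈ antidiagonal n,
      gaussQ q n p.1 * (q ^ (2 * p.2 * (a - p.1)) * (betaQ q a p.1 * betaQ q b p.2)) := by
  induction n with
  | zero => simp [gaussQ_zero, betaQ_zero]
  | succ n ih =>
    rw [sum_gaussQ_succ_mul hq hq1 n
      fun l m => q ^ (2 * m * (a - l)) * (betaQ q a l * betaQ q b m), betaQ_succ, ih, sum_mul]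
    refine sum_congr rfl fun p hp => ?_
    rw [← betaQ_mul_betaQ_mul_qNum hq, ← Nat.cast_add, mem_antidiagonal.1 hp, mul_assoc]

theorem qDeriv_congr (hq : q ≠ 0) {h k : ℝ → ℝ} (hhk : ∀ Z ≠ 0, h Z = k Z) {X : ℝ} (hX : X ≠ 0) :
    qDeriv q h X = qDeriv q k X := by
  rw [qDeriv, qDeriv, hhk X hX, hhk _ (mul_ne_zero (pow_ne_zero 2 hq) hX)]

theorem qDeriv_sum_mul_pow (q : ℝ) {ι : Type*} (t : Finset ι) (a : ι → ℝ) (e : ι → ℕ) {X : ℝ}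
    (hX : X ≠ 0) :
    qDeriv q (fun Z => ∑ u ∈ t, a u * Z ^ e u) X =
      ∑ u ∈ t, a u * qNum q (e u) * X ^ (e u - 1) := by
  rw [qDeriv, ← sum_sub_distrib, sum_div]
  refine sum_congr rfl fun u _ => ?_
  rw [qNum_natCast]
  cases e u with
  | zero => simp
  | succ m =>
    rw [Nat.add_sub_cancel, mul_assoc, ← mul_div_mul_right _ (q ^ 2 - 1) hX]
    ring

theorem iterate_qDeriv_sum_mul_pow (hq : q ≠ 0) {ι : Type*} (t : Finset ι) (a : ι → ℝ)
    (e : ι → ℕ) (n : ℕ) {X : ℝ} (hX : X ≠ 0) :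
    (qDeriv q)^[n] (fun Z => ∑ u ∈ t, a u * Z ^ e u) X =
      ∑ u ∈ t, a u * betaQ q (e u) n * X ^ (e u - n) := by
  induction n generalizing X with
  | zero => simp [betaQ_zero]
  | succ n ih =>
    rw [Function.iterate_succ_apply', qDeriv_congr hq (fun Z hZ => ih hZ) hX,
      qDeriv_sum_mul_pow q _ _ _ hX]
    simp only [betaQ_natCast_succ, mul_assoc, Nat.sub_sub]

/-- The value at `(X, Y)` of the homogeneous polynomial of degree `d` whose coefficient of
`Y ^ u * X ^ (d - u)` is `a u lam`. The variable `X` comes last because `qDeriv` acts on it. -/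
def homogEval (d : ℕ) (a : ℕ → ℝ → ℝ) (lam Y X : ℝ) : ℝ :=
  ∑ u ∈ range (d + 1), a u lam * Y ^ u * X ^ (d - u)

/-- The coefficient family of the `n`-th skew-q-derivative of the homogeneous polynomial of degree
`d` with coefficient family `a`. The degree is real so that no subtraction of degrees truncates. -/
noncomputable def skewDeriv (q d : ℝ) (n : ℕ) (a : ℕ → ℝ → ℝ) : ℕ → ℝ → ℝ :=
  fun i lam => a i lam * betaQ q (d - i) n

/-- The coefficient family of the skew-q-product of the families `f` and `g`, where `s` is the
degree of `g`, real as in `skewDeriv`. -/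
noncomputable def skewMul (q s : ℝ) (f g : ℕ → ℝ → ℝ) : ℕ → ℝ → ℝ :=
  fun u lam => ∑ p ∈ antidiagonal u, q ^ (2 * p.1 * s) * f p.1 lam * g p.2 (lam - 2 * p.1)

theorem iterate_qDeriv_homogEval (hq : q ≠ 0) (d : ℕ) (a : ℕ → ℝ → ℝ) (n : ℕ) (lam Y : ℝ) {X : ℝ}
    (hX : X ≠ 0) :
    (qDeriv q)^[n] (homogEval d a lam Y) X = homogEval (d - n) (skewDeriv q d n a) lam Y X := by
  have range_subset : range (d - n + 1) ⊆ range (d + 1) := range_subset_range.2 (by lia)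
  unfold homogEval skewDeriv
  rw [iterate_qDeriv_sum_mul_pow hq _ _ _ _ hX, ← sum_subset range_subset]
  · refine sum_congr rfl fun u hu => ?_
    have hud : u ≤ d := Nat.lt_succ_iff.1 (mem_range.1 (range_subset hu))
    rw [Nat.cast_sub hud, Nat.sub_right_comm]
    ring
  · intro u hu hu'
    rw [mem_range] at hu hu'
    rw [betaQ_natCast_eq_zero q (by lia), mul_zero, zero_mul]

theorem skewDeriv_skewMul (hq : 0 < q) (hq1 : q ≠ 1) (r s : ℝ) (f g : ℕ → ℝ → ℝ) (n u : ℕ)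
    (lam : ℝ) :
    skewDeriv q (r + s) n (skewMul q s f g) u lam = ∑ p ∈ antidiagonal n,
      gaussQ q n p.1 * q ^ (2 * p.2 * (r - p.1)) *
        skewMul q (s - p.2) (skewDeriv q r p.1 f) (skewDeriv q s p.2 g) u lam := by
  simp only [skewDeriv, skewMul, sum_mul, mul_sum]
  rw [sum_comm]
  refine sum_congr rfl ?_
  rintro ⟨i, j⟩ hij
  obtain rfl : i + j = u := mem_antidiagonal.1 hij
  have degree_split : r + s - (i + j : ℕ) = (r - i) + (s - j) := by
    push_cast
    ring
  rw [degree_split, betaQ_add hq hq1, mul_sum]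
  refine sum_congr rfl fun p _ => ?_
  have weight : q ^ (2 * i * s) * q ^ (2 * p.2 * (r - i - p.1)) =
      q ^ (2 * p.2 * (r - p.1)) * q ^ (2 * i * (s - p.2)) := by
    rw [← Real.rpow_add hq, ← Real.rpow_add hq]
    ring_nf
  linear_combination (f i lam * g j (lam - 2 * i) * gaussQ q n p.1 *
    betaQ q (r - i) p.1 * betaQ q (s - j) p.2) * weight

theorem homogEval_sum {ι : Type*} (t : Finset ι) (c : ι → ℝ) (a : ι → ℕ → ℝ → ℝ) (d : ℕ)
    (lam Y X : ℝ) :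
    homogEval d (fun u lam => ∑ p ∈ t, c p * a p u lam) lam Y X =
      ∑ p ∈ t, c p * homogEval d (a p) lam Y X := by
  simp only [homogEval, sum_mul, mul_sum]
  rw [sum_comm]
  simp only [mul_assoc]

theorem skewMul_eq_sum_range (q s : ℝ) (f g : ℕ → ℝ → ℝ) (u : ℕ) (lam : ℝ) :
    skewMul q s f g u lam =
      ∑ i ∈ range (u + 1), q ^ (2 * i * s) * f i lam * g (u - i) (lam - 2 * i) :=
  Nat.sum_antidiagonal_eq_sum_range_succ_mk _ _

theorem skewMul_natCast_eq_sum_range (q : ℝ) (s : ℕ) (f g : ℕ → ℝ → ℝ) (u : ℕ) (lam : ℝ) :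
    skewMul q s f g u lam =
      ∑ i ∈ range (u + 1), q ^ (2 * i * s) * f i lam * g (u - i) (lam - 2 * i) := by
  rw [skewMul_eq_sum_range]
  exact_mod_cast rfl

theorem skewMul_skewDeriv_eq_sum_range (q r s t : ℝ) (f g : ℕ → ℝ → ℝ) (l m u : ℕ) (lam : ℝ) :
    skewMul q t (skewDeriv q r l f) (skewDeriv q s m g) u lam =
      ∑ i ∈ range (u + 1), q ^ (2 * i * t) * (f i lam * betaQ q (r - i) l) *
        (g (u - i) (lam - 2 * i) * betaQ q (s - (u - i)) m) := by
  rw [skewMul_eq_sum_range]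
  refine sum_congr rfl fun i hi => ?_
  rw [skewDeriv, skewDeriv, Nat.cast_sub (Nat.lt_succ_iff.1 (mem_range.1 hi))]

theorem stmt6_general (hq : 0 < q) (hq1 : q ≠ 1) (r s : ℕ) (f g : ℕ → ℝ → ℝ) (n : ℕ)
    (lam Y : ℝ) {X : ℝ} (hX : X ≠ 0) :
    (qDeriv q)^[n] (homogEval (r + s) (skewMul q s f g) lam Y) X =
      ∑ l ∈ range (n + 1), gaussQ q n l * q ^ (2 * ((n : ℝ) - l) * ((r : ℝ) - l)) *
        homogEval (r + s - n)
          (skewMul q (s - (n - l)) (skewDeriv q r l f) (skewDeriv q s (n - l) g)) lam Y X := by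
  have leibniz := funext₂ (skewDeriv_skewMul hq hq1 r s f g n)
  rw [iterate_qDeriv_homogEval hq.ne' _ _ _ _ _ hX, Nat.cast_add, leibniz, homogEval_sum,
    Nat.sum_antidiagonal_eq_sum_range_succ_mk]
  refine sum_congr rfl fun l hl => ?_
  rw [Nat.cast_sub (Nat.lt_succ_iff.1 (mem_range.1 hl))]

/-- Leibniz rule for the skew-q-derivative of a skew-q-product. -/
theorem stmt6 (q : ℝ) (hq : 1 < q) (r s : ℕ) (f g : ℕ → ℝ → ℝ)
    (hf : ∀ i, r < i → ∀ lam, f i lam = 0) (hg : ∀ i, s < i → ∀ lam, g i lam = 0)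
    (φ : ℕ) (lam Y X : ℝ) (hX : X ≠ 0) :
    ((qDeriv q)^[φ] (fun Z => ∑ u ∈ Finset.range (r + s + 1),
          (∑ i ∈ Finset.range (u + 1), q ^ (2 * i * s) * f i lam * g (u - i) (lam - 2 * (i : ℝ)))
            * Y ^ u * Z ^ (r + s - u))) X
      = ∑ ℓ ∈ Finset.range (φ + 1),
          gaussQ q (φ : ℝ) ℓ * q ^ (2 * ((φ : ℝ) - (ℓ : ℝ)) * ((r : ℝ) - (ℓ : ℝ))) *
            ∑ u ∈ Finset.range ((r + s - φ) + 1),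
              (∑ i ∈ Finset.range (u + 1),
                  q ^ (2 * (i : ℝ) * ((s : ℝ) - ((φ : ℝ) - (ℓ : ℝ)))) *
                    (f i lam * betaQ q ((r : ℝ) - (i : ℝ)) ℓ) *
                    (g (u - i) (lam - 2 * (i : ℝ)) *
                      betaQ q ((s : ℝ) - ((u : ℝ) - (i : ℝ))) (φ - ℓ)))
                * Y ^ u * X ^ ((r + s - φ) - u) := by
  have leibniz := stmt6_general (one_pos.trans hq) hq.ne' r s f g φ lam Y hX
  unfold homogEval at leibniz
  simpa only [skewMul_natCast_eq_sum_range, skewMul_skewDeriv_eq_sum_range] using leibniz
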